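/- arXiv:1110.0810 — 4 statements merged into one kernel-verified Lean document; each statement's English description precedes it below -/
import Mathlib

section
/- Fix N, n ∈ ℕ with 2n < N and y ∈ ℝ^{N−2n}. Let x = (x⁽¹⁾, x⁽²⁾) ∈ ℝ^n × ℝ^n be such that all coordinates x_1⁽¹⁾, …, x_n⁽¹⁾, x_1⁽²⁾, …, x_n⁽²⁾, y_1, …, y_{N−2n} are pairwise distinct. Then H_y is twice differentiable at x and for every v ∈ ℝ^{2n} (writing v_i for the component paired with x_i⁽¹⁾ and v_{i+n} for the component paired with x_i⁽²⁾), the second directional derivative satisfies ⟨v, D²H_y(x) v⟩ = N‖v‖² + Σ_{i=1}^n Σ_{k=1}^{N−2n} [ 2v_i²/(x_i⁽¹⁾ − y_k)² + 2v_{i+n}²/(x_i⁽²⁾ − y_k)² ] + Σ_{i=1}^n Σ_{j≠i} [ (v_i − v_j)²/(x_i⁽¹⁾ − x_j⁽¹⁾)² + (v_{i+n} − v_{j+n})²/(x_i⁽²⁾ − x_j⁽²⁾)² ] + 2 Σ_{i=1}^n Σ_{j=1}^n (v_i − v_{j+n})²/(x_i⁽¹⁾ − x_j⁽²⁾)². 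-/
noncomputable section

/-- The two-cluster Hamiltonian `H_y` as a function on `ℝ^{2n}` (Euclidean space), where the
first `n` coordinates are `x⁽¹⁾` and the last `n` coordinates are `x⁽²⁾`. -/
def clusterHam (N n : ℕ) (y : Fin (N - 2 * n) → ℝ)
    (x : EuclideanSpace ℝ (Fin (n + n))) : ℝ :=
  (N : ℝ) * ((1 / 2) * ∑ i : Fin n, ((x (Fin.castAdd n i)) ^ 2 + (x (Fin.natAdd n i)) ^ 2)
    - (1 / N) * ∑ i : Fin n, ∑ j ∈ Finset.Ioi i,
        Real.log ((x (Fin.castAdd n i) - x (Fin.castAdd n j)) ^ 2)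
    - (1 / N) * ∑ i : Fin n, ∑ j ∈ Finset.Ioi i,
        Real.log ((x (Fin.natAdd n i) - x (Fin.natAdd n j)) ^ 2)
    - (1 / N) * ∑ i : Fin n, ∑ j : Fin n,
        Real.log ((x (Fin.castAdd n i) - x (Fin.natAdd n j)) ^ 2)
    - (1 / N) * ∑ k, ∑ i : Fin n,
        (Real.log ((x (Fin.castAdd n i) - y k) ^ 2)
          + Real.log ((x (Fin.natAdd n i) - y k) ^ 2)))

/-! Up to its normalization, the two-cluster Hamiltonian is the energy of a one-dimensional log gas
with `2n` particles and fixed background charges `y`: a quadratic confinement plus logarithms of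
squared affine functions. Since `u ↦ log (u ^ 2)` has second derivative `-2 / u ^ 2`, precomposing
with an affine function with linear part `L` turns it into the quadratic form
`v ↦ -2 (L v) ^ 2 / u ^ 2`, and the Hessian of a log gas is the sum of these forms. Splitting the
particles of the gas into the two clusters gives the asserted formula. -/

section HessianForm

variable {𝕜 E F G : Type*} [NontriviallyNormedField 𝕜] [NormedAddCommGroup E] [NormedSpace 𝕜 E]
  [NormedAddCommGroup F] [NormedSpace 𝕜 F] [NormedAddCommGroup G] [NormedSpace 𝕜 G]

variable (𝕜) in
/-- `f` is twice continuously differentiable at `x`, and `q` is the quadratic form of its second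
derivative there. Only the values of `q` on vectors are recorded, not a bundled `QuadraticForm`, so
that these forms can be added and composed as functions. -/
structure HasHessianFormAt (f q : E → F) (x : E) : Prop where
  contDiffAt : ContDiffAt 𝕜 2 f x
  iteratedFDeriv_two (v : E) : iteratedFDeriv 𝕜 2 f x (fun _ ↦ v) = q v

namespace HasHessianFormAt

variable {f g : E → F} {q r : E → F} {x : E}

theorem fderiv_fderiv (hf : HasHessianFormAt 𝕜 f q x) (v : E) :
    fderiv 𝕜 (fderiv 𝕜 f) x v v = q v := by
  rw [← hf.iteratedFDeriv_two, iteratedFDeriv_two_apply]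

theorem sub (hf : HasHessianFormAt 𝕜 f q x) (hg : HasHessianFormAt 𝕜 g r x) :
    HasHessianFormAt 𝕜 (fun z ↦ f z - g z) (fun v ↦ q v - r v) x where
  contDiffAt := hf.contDiffAt.sub hg.contDiffAt
  iteratedFDeriv_two v := by
    rw [fun_iteratedFDeriv_sub_apply hf.contDiffAt hg.contDiffAt, sub_apply,
      hf.iteratedFDeriv_two, hg.iteratedFDeriv_two]

theorem const_smul (c : 𝕜) (hf : HasHessianFormAt 𝕜 f q x) :
    HasHessianFormAt 𝕜 (fun z ↦ c • f z) (fun v ↦ c • q v) x where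
  contDiffAt := hf.contDiffAt.const_smul c
  iteratedFDeriv_two v := by
    rw [iteratedFDeriv_const_smul_apply' hf.contDiffAt, smul_apply, hf.iteratedFDeriv_two]

theorem sum {ι : Type*} {s : Finset ι} {f q : ι → E → F}
    (hf : ∀ i ∈ s, HasHessianFormAt 𝕜 (f i) (q i) x) :
    HasHessianFormAt 𝕜 (fun z ↦ ∑ i ∈ s, f i z) (fun v ↦ ∑ i ∈ s, q i v) x where
  contDiffAt := ContDiffAt.sum fun i hi ↦ (hf i hi).contDiffAt
  iteratedFDeriv_two v := by
    rw [iteratedFDeriv_fun_sum_apply fun i hi ↦ (hf i hi).contDiffAt, sum_apply]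
    exact Finset.sum_congr rfl fun i hi ↦ (hf i hi).iteratedFDeriv_two v

theorem comp_clm_sub {f q : G → F} (L : E →L[𝕜] G) (c : G)
    (hf : HasHessianFormAt 𝕜 f q (L x - c)) :
    HasHessianFormAt 𝕜 (fun z ↦ f (L z - c)) (fun v ↦ q (L v)) x where
  contDiffAt := hf.contDiffAt.comp x (L.contDiff.contDiffAt.sub contDiffAt_const)
  iteratedFDeriv_two v := by
    have hL (z : E) : HasFDerivAt (fun z ↦ L z - c) L z := L.hasFDerivAt.sub_const c
    have first_fderiv : fderiv 𝕜 (fun z ↦ f (L z - c)) =ᶠ[nhds x]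
        fun z ↦ (fderiv 𝕜 f (L z - c)).comp L := by
      filter_upwards [(hL x).continuousAt.eventually (hf.contDiffAt.eventually (by simp))]
        with z hz
      exact ((hz.differentiableAt two_ne_zero).hasFDerivAt.comp z (hL z)).fderiv
    have second_fderiv : HasFDerivAt (fderiv 𝕜 f) (fderiv 𝕜 (fderiv 𝕜 f) (L x - c)) (L x - c) :=
      ((hf.contDiffAt.fderiv_right (m := 1) le_rfl).differentiableAt one_ne_zero).hasFDerivAt
    have chain_rule : HasFDerivAt (fun z ↦ (fderiv 𝕜 f (L z - c)).comp L) _ x :=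
      (second_fderiv.comp x (hL x)).clm_comp (hasFDerivAt_const L x)
    rw [iteratedFDeriv_two_apply, first_fderiv.fderiv_eq, chain_rule.fderiv]
    simpa using hf.fderiv_fderiv (L v)

end HasHessianFormAt

theorem hasHessianFormAt_norm_sq {E : Type*} [NormedAddCommGroup E] [InnerProductSpace ℝ E]
    (x : E) : HasHessianFormAt ℝ (fun z : E ↦ ‖z‖ ^ 2) (fun v ↦ 2 * ‖v‖ ^ 2) x where
  contDiffAt := (contDiff_norm_sq ℝ).contDiffAt
  iteratedFDeriv_two v := by
    -- `innerSL ℝ` is bundled as conjugate-linear, which over `ℝ` is definitionally linear.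
    let B : E →L[ℝ] E →L[ℝ] ℝ := innerSL ℝ
    have fderiv_eq : (fderiv ℝ fun z : E ↦ ‖z‖ ^ 2) = (2 • B : E →L[ℝ] E →L[ℝ] ℝ) := fderiv_norm_sq
    rw [iteratedFDeriv_two_apply, fderiv_eq, ContinuousLinearMap.fderiv]
    calc 2 • B v v = 2 * B v v := nsmul_eq_mul 2 (B v v)
      _ = 2 * ‖v‖ ^ 2 := congrArg (2 * ·) (real_inner_self_eq_norm_sq v)

theorem hasHessianFormAt_log {u : ℝ} (hu : u ≠ 0) :
    HasHessianFormAt ℝ Real.log (fun w ↦ -(w ^ 2 / u ^ 2)) u where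
  contDiffAt := Real.contDiffAt_log.2 hu
  iteratedFDeriv_two w := by
    simp only [iteratedFDeriv_apply_eq_iteratedDeriv_mul_prod, iteratedDeriv_succ,
      iteratedDeriv_zero, Real.deriv_log', deriv_inv, Fin.prod_univ_two, smul_eq_mul]
    ring

theorem hasHessianFormAt_log_sq_clm_sub {E : Type*} [NormedAddCommGroup E] [NormedSpace ℝ E]
    (L : E →L[ℝ] ℝ) (c : ℝ) {x : E} (hx : L x - c ≠ 0) :
    HasHessianFormAt ℝ (fun z ↦ Real.log ((L z - c) ^ 2))
      (fun v ↦ -(2 * L v ^ 2 / (L x - c) ^ 2)) x := by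
  convert ((hasHessianFormAt_log hx).comp_clm_sub L c).const_smul 2 using 2 with z v
  · simp only [Real.log_pow, Nat.cast_ofNat, smul_eq_mul]
  · simp only [smul_eq_mul]
    ring

theorem hasHessianFormAt_log_sq_apply_sub_const {ι : Type*} [Fintype ι]
    {x : EuclideanSpace ℝ ι} {a : ι} {c : ℝ} (h : x a ≠ c) :
    HasHessianFormAt ℝ (fun z : EuclideanSpace ℝ ι ↦ Real.log ((z a - c) ^ 2))
      (fun v ↦ -(2 * v a ^ 2 / (x a - c) ^ 2)) x :=
  hasHessianFormAt_log_sq_clm_sub (EuclideanSpace.proj a) c (sub_ne_zero.2 h)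

theorem hasHessianFormAt_log_sq_apply_sub_apply {ι : Type*} [Fintype ι]
    {x : EuclideanSpace ℝ ι} {a b : ι} (h : x a ≠ x b) :
    HasHessianFormAt ℝ (fun z : EuclideanSpace ℝ ι ↦ Real.log ((z a - z b) ^ 2))
      (fun v ↦ -(2 * (v a - v b) ^ 2 / (x a - x b) ^ 2)) x := by
  let L : EuclideanSpace ℝ ι →L[ℝ] ℝ := EuclideanSpace.proj a - EuclideanSpace.proj b
  have hL (z : EuclideanSpace ℝ ι) : L z = z a - z b := rfl
  have hx : L x - 0 ≠ 0 := by rwa [sub_zero, hL, sub_ne_zero]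
  simpa only [sub_zero, hL] using hasHessianFormAt_log_sq_clm_sub L 0 hx

end HessianForm

section LogGas

variable {ι κ : Type*} [Fintype ι] [DecidableEq ι] [Fintype κ]

/-- The energy of a log gas on the line with particles `x a`, fixed charges `y k` and quadratic
confinement of strength `N`. Pairs of particles are counted in both orders, which the factor `1 / 2`
compensates for, so that no order on the index type is needed. -/
def logGasHam (N : ℝ) (y : κ → ℝ) (x : EuclideanSpace ℝ ι) : ℝ :=
  N / 2 * ‖x‖ ^ 2 - ∑ a, ∑ k, Real.log ((x a - y k) ^ 2)
    - 1 / 2 * ∑ a, ∑ b ∈ Finset.univ.erase a, Real.log ((x a - x b) ^ 2)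

/-- The quadratic form, in the variable `v`, of the Hessian of `logGasHam N y` at a configuration
`x` of distinct particles away from the charges `y`. -/
def logGasHessianForm (N : ℝ) (y : κ → ℝ) (x v : EuclideanSpace ℝ ι) : ℝ :=
  N * ‖v‖ ^ 2 + ∑ a, ∑ k, 2 * v a ^ 2 / (x a - y k) ^ 2
    + ∑ a, ∑ b ∈ Finset.univ.erase a, (v a - v b) ^ 2 / (x a - x b) ^ 2

theorem clusterHam_hessian_quadratic_form_general (N : ℝ) (y : κ → ℝ) (x : EuclideanSpace ℝ ι)
    (hx : Function.Injective x) (hxy : ∀ a k, x a ≠ y k) :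
    ContDiffAt ℝ 2 (logGasHam N y) x ∧
      ∀ v, fderiv ℝ (fderiv ℝ (logGasHam N y)) x v v = logGasHessianForm N y x v := by
  have confinement := (hasHessianFormAt_norm_sq x).const_smul (N / 2)
  have background := HasHessianFormAt.sum (s := Finset.univ) fun a _ ↦
    HasHessianFormAt.sum (s := Finset.univ) fun k _ ↦
      hasHessianFormAt_log_sq_apply_sub_const (hxy a k)
  have interaction := HasHessianFormAt.sum (s := Finset.univ) fun a _ ↦
    HasHessianFormAt.sum (s := Finset.univ.erase a) fun b hb ↦
      hasHessianFormAt_log_sq_apply_sub_apply (hx.ne (Finset.ne_of_mem_erase hb).symm)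
  have total := (confinement.sub background).sub (interaction.const_smul (1 / 2 : ℝ))
  refine ⟨total.contDiffAt, fun v ↦ (total.fderiv_fderiv v).trans ?_⟩
  simp only [logGasHessianForm, smul_eq_mul, Finset.sum_neg_distrib, mul_div_assoc,
    ← Finset.mul_sum]
  ring

end LogGas

theorem sum_sum_erase_eq_two_nsmul_sum_Ioi {ι M : Type*} [Fintype ι] [LinearOrder ι]
    [LocallyFiniteOrderTop ι] [LocallyFiniteOrderBot ι] [AddCommMonoid M] {f : ι → ι → M}
    (hf : ∀ a b, f a b = f b a) :
    ∑ a, ∑ b ∈ Finset.univ.erase a, f a b = 2 • ∑ a, ∑ b ∈ Finset.Ioi a, f a b := by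
  calc ∑ a, ∑ b ∈ Finset.univ.erase a, f a b
      = ∑ a, ∑ b ∈ {a}ᶜ, f b a := by simp only [Finset.compl_singleton, hf]
    _ = 2 • ∑ a, ∑ b ∈ Finset.Ioi a, f a b := by
      rw [← Finset.sum_sum_Ioi_add_eq_sum_sum_off_diag]
      simp only [hf, ← two_nsmul, Finset.sum_nsmul]

theorem sum_sum_erase_fin_add {m n : ℕ} {M : Type*} [AddCommMonoid M]
    {f : Fin (m + n) → Fin (m + n) → M} (hf : ∀ a b, f a b = f b a) :
    ∑ a, ∑ b ∈ Finset.univ.erase a, f a b =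
      ∑ i, ∑ j ∈ Finset.univ.erase i, f (Fin.castAdd n i) (Fin.castAdd n j)
        + ∑ i, ∑ j ∈ Finset.univ.erase i, f (Fin.natAdd m i) (Fin.natAdd m j)
        + 2 • ∑ i, ∑ j, f (Fin.castAdd n i) (Fin.natAdd m j) := by
  have cross : ∑ j, ∑ i, f (Fin.natAdd m j) (Fin.castAdd n i) =
      ∑ i, ∑ j, f (Fin.castAdd n i) (Fin.natAdd m j) := by
    rw [Finset.sum_comm]
    simp only [hf (Fin.natAdd m _)]
  have natAdd_ne_castAdd (i : Fin m) (j : Fin n) : Fin.natAdd m j ≠ Fin.castAdd n i :=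
    Fin.ne_of_gt (i.isLt.trans_le (Fin.le_coe_natAdd m j))
  simp only [← Finset.filter_ne', Finset.sum_filter, Fin.sum_univ_add]
  simp only [ne_eq, (Fin.castAdd_injective m n).eq_iff, (Fin.natAdd_injective n m).eq_iff,
    natAdd_ne_castAdd, (natAdd_ne_castAdd _ _).symm, not_false_eq_true, if_true,
    Finset.sum_add_distrib, cross]
  abel

theorem injective_fin_add {m n : ℕ} {α : Type*} {x : Fin (m + n) → α}
    (h₁ : ∀ i j, i ≠ j → x (Fin.castAdd n i) ≠ x (Fin.castAdd n j))
    (h₂ : ∀ i j, i ≠ j → x (Fin.natAdd m i) ≠ x (Fin.natAdd m j))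
    (h₁₂ : ∀ i j, x (Fin.castAdd n i) ≠ x (Fin.natAdd m j)) : Function.Injective x := by
  rw [← Fin.append_castAdd_natAdd (f := x), Fin.append_injective_iff]
  exact ⟨fun i j ↦ not_imp_not.1 (h₁ i j), fun i j ↦ not_imp_not.1 (h₂ i j), h₁₂⟩

theorem clusterHam_eq_logGasHam {N n : ℕ} (hN : N ≠ 0) (y : Fin (N - 2 * n) → ℝ) :
    clusterHam N n y = logGasHam (N : ℝ) y := by
  have hN' : (N : ℝ) ≠ 0 := Nat.cast_ne_zero.2 hN
  ext x
  rw [clusterHam, logGasHam, sum_sum_erase_fin_add fun a b ↦ by rw [sub_sq_comm],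
    sum_sum_erase_eq_two_nsmul_sum_Ioi fun i j ↦ by rw [sub_sq_comm],
    sum_sum_erase_eq_two_nsmul_sum_Ioi fun i j ↦ by rw [sub_sq_comm],
    EuclideanSpace.real_norm_sq_eq, Fin.sum_univ_add, Fin.sum_univ_add,
    Finset.sum_comm (s := (Finset.univ : Finset (Fin (N - 2 * n))))]
  simp only [Finset.sum_add_distrib, nsmul_eq_mul]
  field_simp
  ring

theorem logGasHessianForm_fin_add {κ : Type*} [Fintype κ] {m n : ℕ} (N : ℝ) (y : κ → ℝ)
    (x v : EuclideanSpace ℝ (Fin (m + n))) :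
    logGasHessianForm N y x v = N * ‖v‖ ^ 2
      + (∑ i, ∑ k, 2 * v (Fin.castAdd n i) ^ 2 / (x (Fin.castAdd n i) - y k) ^ 2
        + ∑ i, ∑ k, 2 * v (Fin.natAdd m i) ^ 2 / (x (Fin.natAdd m i) - y k) ^ 2)
      + (∑ i, ∑ j ∈ Finset.univ.erase i, (v (Fin.castAdd n i) - v (Fin.castAdd n j)) ^ 2
            / (x (Fin.castAdd n i) - x (Fin.castAdd n j)) ^ 2
        + ∑ i, ∑ j ∈ Finset.univ.erase i, (v (Fin.natAdd m i) - v (Fin.natAdd m j)) ^ 2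
            / (x (Fin.natAdd m i) - x (Fin.natAdd m j)) ^ 2)
      + 2 * ∑ i, ∑ j, (v (Fin.castAdd n i) - v (Fin.natAdd m j)) ^ 2
          / (x (Fin.castAdd n i) - x (Fin.natAdd m j)) ^ 2 := by
  rw [logGasHessianForm, Fin.sum_univ_add,
    sum_sum_erase_fin_add fun a b ↦ by rw [sub_sq_comm (v a), sub_sq_comm (x a)]]
  simp only [nsmul_eq_mul, Nat.cast_ofNat, add_assoc]

/-- Twice differentiability of the two-cluster Hamiltonian at a configuration with pairwise
distinct coordinates, together with the explicit formula for its Hessian quadratic form. -/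
theorem clusterHam_hessian_quadratic_form (N n : ℕ) (hn : 2 * n < N)
    (y : Fin (N - 2 * n) → ℝ) (x : EuclideanSpace ℝ (Fin (n + n)))
    (h1 : ∀ i j : Fin n, i ≠ j → x (Fin.castAdd n i) ≠ x (Fin.castAdd n j))
    (h2 : ∀ i j : Fin n, i ≠ j → x (Fin.natAdd n i) ≠ x (Fin.natAdd n j))
    (h12 : ∀ i j : Fin n, x (Fin.castAdd n i) ≠ x (Fin.natAdd n j))
    (hy1 : ∀ (i : Fin n) (k : Fin (N - 2 * n)), x (Fin.castAdd n i) ≠ y k)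
    (hy2 : ∀ (i : Fin n) (k : Fin (N - 2 * n)), x (Fin.natAdd n i) ≠ y k)
    (hyy : ∀ k l : Fin (N - 2 * n), k ≠ l → y k ≠ y l) :
    ContDiffAt ℝ 2 (clusterHam N n y) x ∧
      ∀ v : EuclideanSpace ℝ (Fin (n + n)),
        fderiv ℝ (fderiv ℝ (clusterHam N n y)) x v v
          = (N : ℝ) * ‖v‖ ^ 2
            + (∑ i : Fin n, ∑ k,
                (2 * (v (Fin.castAdd n i)) ^ 2 / (x (Fin.castAdd n i) - y k) ^ 2
                  + 2 * (v (Fin.natAdd n i)) ^ 2 / (x (Fin.natAdd n i) - y k) ^ 2))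
            + (∑ i : Fin n, ∑ j ∈ Finset.univ.erase i,
                ((v (Fin.castAdd n i) - v (Fin.castAdd n j)) ^ 2
                    / (x (Fin.castAdd n i) - x (Fin.castAdd n j)) ^ 2
                  + (v (Fin.natAdd n i) - v (Fin.natAdd n j)) ^ 2
                    / (x (Fin.natAdd n i) - x (Fin.natAdd n j)) ^ 2))
            + 2 * ∑ i : Fin n, ∑ j : Fin n,
                (v (Fin.castAdd n i) - v (Fin.natAdd n j)) ^ 2
                  / (x (Fin.castAdd n i) - x (Fin.natAdd n j)) ^ 2 := by
  rw [clusterHam_eq_logGasHam (Nat.ne_zero_of_lt hn)]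
  simpa only [logGasHessianForm_fin_add, ← Finset.sum_add_distrib] using
    clusterHam_hessian_quadratic_form_general N y x (injective_fin_add h1 h2 h12)
      (Fin.addCases hy1 hy2)
end
end

section
/- Fix N, n ∈ ℕ with 2n < N and y ∈ ℝ^{N−2n} with strictly increasing coordinates. Let x = (x⁽¹⁾, x⁽²⁾) ∈ ℝ^n × ℝ^n have all coordinates pairwise distinct from each other and from the y_k. Then for every v ∈ ℝ^{2n}, ⟨v, D²H_y(x) v⟩ ≥ N‖v‖². Moreover, if there are indices L_1 < L_2 with L_1 + 1 ≤ N − 2n and L_2 + 1 ≤ N − 2n such that every x_i⁽¹⁾ lies in the open interval (y_{L_1}, y_{L_1+1}), every x_i⁽²⁾ lies in (y_{L_2}, y_{L_2+1}), and both gaps satisfy y_{L_1+1} − y_{L_1} ≤ 2n/N and y_{L_2+1} − y_{L_2} ≤ 2n/N, then ⟨v, D²H_y(x) v⟩ ≥ (N + N²/(2n²)) ‖v‖² for every v ∈ ℝ^{2n}. -/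
noncomputable section

/-!
Up to grouping of its terms, the two-cluster Hamiltonian is the energy of a single log-gas of `2n`
particles in the field of the fixed charges `y k`, and its Hessian form is an explicit sum of
squares: every pair of particles contributes `2 (v i - v j)² / (x i - x j)²`, every
particle-charge pair `2 (v i)² / (x i - y k)²`, and the confining quadratic `N ‖v‖²`. Discarding
everything but the latter gives the first bound; keeping in addition, for each particle, the charge
at the lower end of its gap, at distance at most `2n / N`, gains `2 / (2n / N)² = N² / (2n²)`.
-/

open scoped Topology

/-- `f` is differentiable near `x`, and its derivative is differentiable at `x` with derivative
`f''`: the second-order analogue of `HasFDerivAt`. -/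
def HasSecondFDerivAt {𝕜 E F : Type*} [NontriviallyNormedField 𝕜] [NormedAddCommGroup E]
    [NormedSpace 𝕜 E] [NormedAddCommGroup F] [NormedSpace 𝕜 F]
    (f : E → F) (f'' : E →L[𝕜] E →L[𝕜] F) (x : E) : Prop :=
  (∀ᶠ z in 𝓝 x, DifferentiableAt 𝕜 f z) ∧ HasFDerivAt (fderiv 𝕜 f) f'' x

namespace HasSecondFDerivAt

variable {𝕜 E F : Type*} [NontriviallyNormedField 𝕜] [NormedAddCommGroup E] [NormedSpace 𝕜 E]
  [NormedAddCommGroup F] [NormedSpace 𝕜 F] {f g : E → F} {f'' g'' : E →L[𝕜] E →L[𝕜] F} {x : E}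

theorem of_eventually_hasFDerivAt {f' : E → E →L[𝕜] F}
    (hf : ∀ᶠ z in 𝓝 x, HasFDerivAt f (f' z) z) (hf' : HasFDerivAt f' f'' x) :
    HasSecondFDerivAt f f'' x :=
  ⟨hf.mono fun _ hz => hz.differentiableAt,
    hf'.congr_of_eventuallyEq (hf.mono fun _ hz => hz.fderiv)⟩

theorem eventually_hasFDerivAt (hf : HasSecondFDerivAt f f'' x) :
    ∀ᶠ z in 𝓝 x, HasFDerivAt f (fderiv 𝕜 f z) z :=
  hf.1.mono fun _ hz => hz.hasFDerivAt

theorem fderiv_fderiv (hf : HasSecondFDerivAt f f'' x) : fderiv 𝕜 (fderiv 𝕜 f) x = f'' :=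
  hf.2.fderiv

theorem sub (hf : HasSecondFDerivAt f f'' x) (hg : HasSecondFDerivAt g g'' x) :
    HasSecondFDerivAt (fun z => f z - g z) (f'' - g'') x :=
  of_eventually_hasFDerivAt
    (hf.eventually_hasFDerivAt.mp (hg.eventually_hasFDerivAt.mono fun _ hgz hfz => hfz.sub hgz))
    (hf.2.sub hg.2)

theorem sum {α : Type*} {s : Finset α} {f : α → E → F} {f'' : α → E →L[𝕜] E →L[𝕜] F}
    (hf : ∀ a ∈ s, HasSecondFDerivAt (f a) (f'' a) x) :
    HasSecondFDerivAt (fun z => ∑ a ∈ s, f a z) (∑ a ∈ s, f'' a) x :=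
  of_eventually_hasFDerivAt
    (((Filter.eventually_all_finset s).2 fun a ha => (hf a ha).eventually_hasFDerivAt).mono
      fun _ hz => HasFDerivAt.fun_sum hz)
    (HasFDerivAt.fun_sum fun a ha => (hf a ha).2)

theorem comp_continuousLinearMap (l : E →L[𝕜] 𝕜) {φ φ' : 𝕜 → 𝕜} {φ'' : 𝕜}
    (hφ : ∀ᶠ t in 𝓝 (l x), HasDerivAt φ (φ' t) t) (hφ' : HasDerivAt φ' φ'' (l x)) :
    HasSecondFDerivAt (fun z => φ (l z)) (φ'' • l.smulRight l) x := by
  refine of_eventually_hasFDerivAt (f' := fun z => φ' (l z) • l) ?_ ?_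
  · filter_upwards [l.continuous.continuousAt.eventually hφ] with z hz
    exact hz.comp_hasFDerivAt z l.hasFDerivAt
  · have smulRight_smul : φ'' • l.smulRight l = (φ'' • l).smulRight l := by
      ext
      simp [mul_assoc]
    rw [smulRight_smul]
    exact (hφ'.comp_hasFDerivAt x l.hasFDerivAt).smul_const l

end HasSecondFDerivAt

theorem hasSecondFDerivAt_const_mul_norm_sq {E : Type*} [NormedAddCommGroup E]
    [InnerProductSpace ℝ E] (c : ℝ) (x : E) :
    HasSecondFDerivAt (fun z : E => c * ‖z‖ ^ 2) ((2 * c) • innerSL ℝ) x := by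
  refine .of_eventually_hasFDerivAt (f' := ⇑((2 * c) • innerSL ℝ)) (.of_forall fun z => ?_)
    (ContinuousLinearMap.hasFDerivAt _)
  have gradient_eq : ((2 * c) • innerSL ℝ) z = c • 2 • innerSL ℝ z := by
    rw [smul_apply]
    module
  exact gradient_eq ▸ (hasStrictFDerivAt_norm_sq z).hasFDerivAt.const_mul c

theorem hasSecondFDerivAt_log_sub_sq {E : Type*} [NormedAddCommGroup E] [NormedSpace ℝ E]
    (l : E →L[ℝ] ℝ) {a : ℝ} {x : E} (hx : l x ≠ a) :
    HasSecondFDerivAt (fun z => Real.log ((l z - a) ^ 2))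
      ((-2 / (l x - a) ^ 2) • l.smulRight l) x := by
  have hasDerivAt_sub (t : ℝ) : HasDerivAt (fun s => s - a) 1 t := (hasDerivAt_id t).sub_const a
  simp only [Real.log_pow, Nat.cast_ofNat]
  refine .comp_continuousLinearMap l (φ := fun t => 2 * Real.log (t - a))
    (φ' := fun t => 2 * (t - a)⁻¹) ?_ ?_
  · filter_upwards [isOpen_ne.mem_nhds hx] with t ht
    simpa using ((hasDerivAt_sub t).log (sub_ne_zero.2 ht)).const_mul 2
  · rw [show -2 / (l x - a) ^ 2 = 2 * (-1 / (l x - a) ^ 2) by ring]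
    exact ((hasDerivAt_sub (l x)).fun_inv (sub_ne_zero.2 hx)).const_mul 2

theorem two_div_sq_mul_norm_sq_le_sum {ι κ : Type*} [Fintype ι] [Fintype κ] {y : κ → ℝ}
    {x : EuclideanSpace ℝ ι} {r : ℝ} (hxy : ∀ i k, x i ≠ y k) (hr : ∀ i, ∃ k, |x i - y k| ≤ r)
    (v : EuclideanSpace ℝ ι) :
    2 / r ^ 2 * ‖v‖ ^ 2 ≤ ∑ i, ∑ k, 2 / (x i - y k) ^ 2 * v i ^ 2 := by
  rw [EuclideanSpace.real_norm_sq_eq, Finset.mul_sum]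
  gcongr with i
  obtain ⟨k, hk⟩ := hr i
  have dist_pos : 0 < |x i - y k| := abs_pos.2 (sub_ne_zero.2 (hxy i k))
  calc 2 / r ^ 2 * v i ^ 2
    _ ≤ 2 / |x i - y k| ^ 2 * v i ^ 2 := by gcongr
    _ = 2 / (x i - y k) ^ 2 * v i ^ 2 := by rw [sq_abs]
    _ ≤ ∑ k, 2 / (x i - y k) ^ 2 * v i ^ 2 :=
      Finset.single_le_sum (f := fun k => 2 / (x i - y k) ^ 2 * v i ^ 2)
        (fun _ _ => by positivity) (Finset.mem_univ k)

section LogGas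

variable {ι κ : Type*} [Fintype ι] [LinearOrder ι] [LocallyFiniteOrderTop ι] [Fintype κ]
  {c : ℝ} {y : κ → ℝ} {x : EuclideanSpace ℝ ι}

/-- The energy of a log-gas: particles at positions `x i`, confined by the potential `c t² / 2`
and repelled logarithmically by one another and by fixed charges at the points `y k`. Each pair
of particles is counted once, by means of a linear order on the index type. -/
def logGasEnergy (c : ℝ) (y : κ → ℝ) (x : EuclideanSpace ℝ ι) : ℝ :=
  c / 2 * ‖x‖ ^ 2 - ∑ i, ∑ j ∈ Finset.Ioi i, Real.log ((x i - x j) ^ 2)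
    - ∑ i, ∑ k, Real.log ((x i - y k) ^ 2)

theorem fderiv_fderiv_logGasEnergy_apply_self (hx : Function.Injective x)
    (hxy : ∀ i k, x i ≠ y k) (v : EuclideanSpace ℝ ι) :
    fderiv ℝ (fderiv ℝ (logGasEnergy c y)) x v v =
      c * ‖v‖ ^ 2 + ∑ i, ∑ j ∈ Finset.Ioi i, 2 / (x i - x j) ^ 2 * (v i - v j) ^ 2
        + ∑ i, ∑ k, 2 / (x i - y k) ^ 2 * v i ^ 2 := by
  let coord (i : ι) : EuclideanSpace ℝ ι →L[ℝ] ℝ := EuclideanSpace.proj i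
  have particle_pair (i j : ι) (hij : j ∈ Finset.Ioi i) :
      HasSecondFDerivAt (fun z : EuclideanSpace ℝ ι => Real.log ((z i - z j) ^ 2))
        ((-2 / (x i - x j) ^ 2) • (coord i - coord j).smulRight (coord i - coord j)) x := by
    simpa [coord] using hasSecondFDerivAt_log_sub_sq (coord i - coord j) (a := 0) (x := x)
      (sub_ne_zero.2 (hx.ne (Finset.mem_Ioi.1 hij).ne))
  have particle_charge (i : ι) (k : κ) :
      HasSecondFDerivAt (fun z : EuclideanSpace ℝ ι => Real.log ((z i - y k) ^ 2))
        ((-2 / (x i - y k) ^ 2) • (coord i).smulRight (coord i)) x :=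
    hasSecondFDerivAt_log_sub_sq (coord i) (hxy i k)
  have energy := ((hasSecondFDerivAt_const_mul_norm_sq (c / 2) x).sub
    (.sum (s := Finset.univ) fun i _ => .sum (particle_pair i))).sub
    (.sum (s := Finset.univ) fun i _ => .sum (s := Finset.univ) fun k _ => particle_charge i k)
  have inner_self : (innerSL ℝ : EuclideanSpace ℝ ι →L[ℝ] _) v v = ‖v‖ ^ 2 :=
    real_inner_self_eq_norm_sq v
  refine (DFunLike.congr_fun (DFunLike.congr_fun energy.fderiv_fderiv v) v).trans ?_
  simp [coord, inner_self, neg_div, ← pow_two, mul_div_cancel₀]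

theorem clusterHam_hessian_lower_bound_general (hx : Function.Injective x)
    (hxy : ∀ i k, x i ≠ y k) :
    (∀ v, c * ‖v‖ ^ 2 ≤ fderiv ℝ (fderiv ℝ (logGasEnergy c y)) x v v) ∧
      ∀ r, (∀ i, ∃ k, |x i - y k| ≤ r) →
        ∀ v, (c + 2 / r ^ 2) * ‖v‖ ^ 2 ≤ fderiv ℝ (fderiv ℝ (logGasEnergy c y)) x v v := by
  have pairs_nonneg (v : EuclideanSpace ℝ ι) :
      0 ≤ ∑ i, ∑ j ∈ Finset.Ioi i, 2 / (x i - x j) ^ 2 * (v i - v j) ^ 2 := by positivity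
  have charges_nonneg (v : EuclideanSpace ℝ ι) :
      0 ≤ ∑ i, ∑ k, 2 / (x i - y k) ^ 2 * v i ^ 2 := by positivity
  simp only [fderiv_fderiv_logGasEnergy_apply_self hx hxy]
  exact ⟨fun v => by linarith [pairs_nonneg v, charges_nonneg v],
    fun r hr v => by linarith [pairs_nonneg v, two_div_sq_mul_norm_sq_le_sum hxy hr v]⟩

end LogGas

theorem sum_sum_Ioi_fin_add {M : Type*} [AddCommMonoid M] {m n : ℕ}
    (f : Fin (m + n) → Fin (m + n) → M) :
    ∑ a, ∑ b ∈ Finset.Ioi a, f a b =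
      ∑ i : Fin m, ∑ j ∈ Finset.Ioi i, f (Fin.castAdd n i) (Fin.castAdd n j)
        + ∑ i : Fin n, ∑ j ∈ Finset.Ioi i, f (Fin.natAdd m i) (Fin.natAdd m j)
        + ∑ i : Fin m, ∑ j : Fin n, f (Fin.castAdd n i) (Fin.natAdd m j) := by
  have castAdd_lt_natAdd (i : Fin m) (j : Fin n) : Fin.castAdd n i < Fin.natAdd m j :=
    Fin.lt_def.2 (Nat.lt_add_right _ i.isLt)
  simp only [← Finset.filter_lt_eq_Ioi, Finset.sum_filter, Fin.sum_univ_add,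
    Finset.sum_add_distrib, castAdd_lt_natAdd, (castAdd_lt_natAdd _ _).not_gt,
    (Fin.strictMono_castAdd n).lt_iff_lt, Fin.natAdd_lt_natAdd_iff, if_true, if_false,
    Finset.sum_const_zero, add_zero]
  abel

theorem clusterHam_eq_logGasEnergy {N n : ℕ} (hN : N ≠ 0) (y : Fin (N - 2 * n) → ℝ) :
    clusterHam N n y = logGasEnergy (N : ℝ) y := by
  funext x
  have charges_comm : ∑ k, ∑ i : Fin n, (Real.log ((x (Fin.castAdd n i) - y k) ^ 2)
      + Real.log ((x (Fin.natAdd n i) - y k) ^ 2)) = ∑ a, ∑ k, Real.log ((x a - y k) ^ 2) := by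
    rw [Finset.sum_comm, Fin.sum_univ_add]
    simp only [Finset.sum_add_distrib]
  have norm_sq_eq : ‖x‖ ^ 2
      = ∑ i : Fin n, (x (Fin.castAdd n i) ^ 2 + x (Fin.natAdd n i) ^ 2) := by
    rw [EuclideanSpace.real_norm_sq_eq, Fin.sum_univ_add, Finset.sum_add_distrib]
  rw [clusterHam, charges_comm, logGasEnergy, norm_sq_eq, sum_sum_Ioi_fin_add]
  field_simp
  ring

/-- Convexity lower bounds for the Hessian quadratic form of the two-cluster Hamiltonian:
it is always at least `N‖v‖²`, and at least `(N + N²/(2n²))‖v‖²` when the two clusters are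
confined to external eigenvalue gaps of width at most `2n/N`. -/
theorem clusterHam_hessian_lower_bound (N n : ℕ) (hn : 2 * n < N)
    (y : Fin (N - 2 * n) → ℝ) (hy : StrictMono y)
    (x : EuclideanSpace ℝ (Fin (n + n)))
    (h1 : ∀ i j : Fin n, i ≠ j → x (Fin.castAdd n i) ≠ x (Fin.castAdd n j))
    (h2 : ∀ i j : Fin n, i ≠ j → x (Fin.natAdd n i) ≠ x (Fin.natAdd n j))
    (h12 : ∀ i j : Fin n, x (Fin.castAdd n i) ≠ x (Fin.natAdd n j))
    (hy1 : ∀ (i : Fin n) (k : Fin (N - 2 * n)), x (Fin.castAdd n i) ≠ y k)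
    (hy2 : ∀ (i : Fin n) (k : Fin (N - 2 * n)), x (Fin.natAdd n i) ≠ y k) :
    (∀ v : EuclideanSpace ℝ (Fin (n + n)),
        (N : ℝ) * ‖v‖ ^ 2 ≤ fderiv ℝ (fderiv ℝ (clusterHam N n y)) x v v) ∧
      ∀ (L₁ L₂ : ℕ) (hL₁ : L₁ + 1 < N - 2 * n) (hL₂ : L₂ + 1 < N - 2 * n), L₁ < L₂ →
        (∀ i : Fin n, x (Fin.castAdd n i)
          ∈ Set.Ioo (y ⟨L₁, Nat.lt_of_succ_lt hL₁⟩) (y ⟨L₁ + 1, hL₁⟩)) →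
        (∀ i : Fin n, x (Fin.natAdd n i)
          ∈ Set.Ioo (y ⟨L₂, Nat.lt_of_succ_lt hL₂⟩) (y ⟨L₂ + 1, hL₂⟩)) →
        y ⟨L₁ + 1, hL₁⟩ - y ⟨L₁, Nat.lt_of_succ_lt hL₁⟩ ≤ 2 * n / N →
        y ⟨L₂ + 1, hL₂⟩ - y ⟨L₂, Nat.lt_of_succ_lt hL₂⟩ ≤ 2 * n / N →
        ∀ v : EuclideanSpace ℝ (Fin (n + n)),
          ((N : ℝ) + (N : ℝ) ^ 2 / (2 * (n : ℝ) ^ 2)) * ‖v‖ ^ 2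
            ≤ fderiv ℝ (fderiv ℝ (clusterHam N n y)) x v v := by
  have hx : Function.Injective x := by
    rw [← Fin.append_castAdd_natAdd (f := ⇑x)]
    exact Fin.append_injective_iff.2 ⟨fun i j => not_imp_not.1 (h1 i j),
      fun i j => not_imp_not.1 (h2 i j), h12⟩
  rw [clusterHam_eq_logGasEnergy (Nat.ne_zero_of_lt hn) y]
  obtain ⟨convex, confined⟩ := clusterHam_hessian_lower_bound_general (c := N) hx
    ((Fin.forall_fin_add _).2 ⟨hy1, hy2⟩)
  refine ⟨convex, fun L₁ L₂ hL₁ hL₂ _ hx₁ hx₂ hgap₁ hgap₂ v => ?_⟩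
  have dist_left_end {a b t : ℝ} (ht : t ∈ Set.Ioo a b) : |t - a| ≤ b - a :=
    abs_sub_le_of_le_of_le ht.1.le ht.2.le le_rfl (ht.1.trans ht.2).le
  have near_charge : ∀ a, ∃ k, |x a - y k| ≤ 2 * n / N := (Fin.forall_fin_add _).2
    ⟨fun i => ⟨_, (dist_left_end (hx₁ i)).trans hgap₁⟩,
      fun i => ⟨_, (dist_left_end (hx₂ i)).trans hgap₂⟩⟩
  have gain_eq : (N : ℝ) ^ 2 / (2 * n ^ 2) = 2 / (2 * n / N) ^ 2 := by field_simp
  exact gain_eq ▸ confined _ near_charge v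
end
end

section
/- Fix n ∈ ℕ, ℓ > 0 and d > 0, and let I_1, I_2 ⊆ ℝ be compact intervals each of length at most ℓ with dist(I_1, I_2) ≥ d. Then for all x⁽¹⁾, z⁽¹⁾, x'⁽¹⁾, z'⁽¹⁾ ∈ I_1^n and all x⁽²⁾, z⁽²⁾, x'⁽²⁾, z'⁽²⁾ ∈ I_2^n one has |R_{(z⁽¹⁾,z⁽²⁾)}(x⁽¹⁾, x⁽²⁾) − R_{(z'⁽¹⁾,z'⁽²⁾)}(x'⁽¹⁾, x'⁽²⁾)| ≤ 12 n² ℓ / d; in particular the oscillation of R over such configurations is at most 12 n² ℓ / d. -/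
/-!
On `{u | d ≤ |u|}` the function `u ↦ log (u ^ 2)` is `2 / d`-Lipschitz. Since `R_z(x)` is a signed
sum of three double sums of `log ((s - t) ^ 2)` over pairs of points `s`, `t` at distance at least
`d`, it is itself Lipschitz in `(z, x)`, and its oscillation is at most the Lipschitz constant times
the diameter of the configuration space.
-/

noncomputable section

/-- The coupling remainder `R_z(x)` for `x = (x⁽¹⁾, x⁽²⁾)` and `z = (z⁽¹⁾, z⁽²⁾)` in `ℝⁿ × ℝⁿ`. -/
def couplingR (n : ℕ) (z x : (Fin n → ℝ) × (Fin n → ℝ)) : ℝ :=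
  (∑ i, ∑ k, (Real.log ((x.1 i - z.2 k) ^ 2) + Real.log ((x.2 i - z.1 k) ^ 2)))
    - ∑ i, ∑ j, Real.log ((x.1 i - x.2 j) ^ 2)

theorem abs_log_sub_log_le {d u v : ℝ} (hd : 0 < d) (hu : d ≤ |u|) (hv : d ≤ |v|) :
    |Real.log u - Real.log v| ≤ |u - v| / d := by
  have log_sub_log_le {s t : ℝ} (hs : d ≤ |s|) (ht : d ≤ |t|) :
      Real.log s - Real.log t ≤ |s - t| / d := by
    have hs₀ : 0 < |s| := hd.trans_le hs
    have ht₀ : 0 < |t| := hd.trans_le ht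
    calc Real.log s - Real.log t = Real.log (|s| / |t|) := by
          rw [Real.log_div hs₀.ne' ht₀.ne', Real.log_abs, Real.log_abs]
      _ ≤ |s| / |t| - 1 := Real.log_le_sub_one_of_pos (div_pos hs₀ ht₀)
      _ = (|s| - |t|) / |t| := by rw [sub_div, div_self ht₀.ne']
      _ ≤ |s - t| / |t| := by gcongr; exact abs_sub_abs_le_abs_sub s t
      _ ≤ |s - t| / d := by gcongr
  exact abs_sub_le_iff.2 ⟨log_sub_log_le hu hv, abs_sub_comm u v ▸ log_sub_log_le hv hu⟩

theorem abs_log_sq_sub_log_sq_le {d u v : ℝ} (hd : 0 < d) (hu : d ≤ |u|) (hv : d ≤ |v|) :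
    |Real.log (u ^ 2) - Real.log (v ^ 2)| ≤ 2 * |u - v| / d :=
  calc |Real.log (u ^ 2) - Real.log (v ^ 2)| = 2 * |Real.log u - Real.log v| := by
        rw [Real.log_pow, Real.log_pow, Nat.cast_ofNat, ← mul_sub, abs_mul, abs_two]
    _ ≤ 2 * (|u - v| / d) := by gcongr; exact abs_log_sub_log_le hd hu hv
    _ = 2 * |u - v| / d := (mul_div_assoc _ _ _).symm

section LogInteraction

variable {ι κ : Type*} [Fintype ι] [Fintype κ]

/-- The logarithmic interaction energy `∑ i, ∑ k, log ((x i - y k) ^ 2)` between two finite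
families of points on the line; the coupling remainder is a signed sum of three such energies. -/
def logInteraction (x : ι → ℝ) (y : κ → ℝ) : ℝ :=
  ∑ i, ∑ k, Real.log ((x i - y k) ^ 2)

theorem abs_logInteraction_sub_le {d : ℝ} (hd : 0 < d) {x x' : ι → ℝ} {y y' : κ → ℝ}
    (hxy : ∀ i k, d ≤ dist (x i) (y k)) (hxy' : ∀ i k, d ≤ dist (x' i) (y' k)) :
    |logInteraction x y - logInteraction x' y'|
      ≤ 2 * (Fintype.card ι * Fintype.card κ) * (dist x x' + dist y y') / d := by
  have pair_bound (i : ι) (k : κ) :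
      |Real.log ((x i - y k) ^ 2) - Real.log ((x' i - y' k) ^ 2)|
        ≤ 2 * (dist x x' + dist y y') / d := by
    refine (abs_log_sq_sub_log_sq_le hd (hxy i k) (hxy' i k)).trans ?_
    gcongr
    exact (dist_sub_sub_le (x i) (y k) (x' i) (y' k)).trans
      (add_le_add (dist_le_pi_dist x x' i) (dist_le_pi_dist y y' k))
  calc |logInteraction x y - logInteraction x' y'|
      = |∑ i, ∑ k, (Real.log ((x i - y k) ^ 2) - Real.log ((x' i - y' k) ^ 2))| := by
        simp only [logInteraction, Finset.sum_sub_distrib]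
    _ ≤ ∑ i, ∑ k, |Real.log ((x i - y k) ^ 2) - Real.log ((x' i - y' k) ^ 2)| :=
        (Finset.abs_sum_le_sum_abs _ _).trans
          (Finset.sum_le_sum fun _ _ => Finset.abs_sum_le_sum_abs _ _)
    _ ≤ ∑ _i : ι, ∑ _k : κ, 2 * (dist x x' + dist y y') / d :=
        Finset.sum_le_sum fun i _ => Finset.sum_le_sum fun k _ => pair_bound i k
    _ = 2 * (Fintype.card ι * Fintype.card κ) * (dist x x' + dist y y') / d := by
        simp only [Finset.sum_const, Finset.card_univ, nsmul_eq_mul]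
        ring

end LogInteraction

theorem couplingR_eq_logInteraction (n : ℕ) (z x : (Fin n → ℝ) × (Fin n → ℝ)) :
    couplingR n z x
      = logInteraction x.1 z.2 + logInteraction x.2 z.1 - logInteraction x.1 x.2 := by
  simp only [couplingR, logInteraction, Finset.sum_add_distrib]

/-- The configuration space `Sⁿ × Tⁿ ⊆ ℝⁿ × ℝⁿ`, over which the oscillation of the coupling
remainder is taken; the ambient product carries the sup metric. -/
def configurations (n : ℕ) (S T : Set ℝ) : Set ((Fin n → ℝ) × (Fin n → ℝ)) :=
  {x | (∀ i, x.1 i ∈ S) ∧ ∀ i, x.2 i ∈ T}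

theorem dist_le_of_mem_configurations {n : ℕ} {S T : Set ℝ} {r : ℝ} (hr : 0 ≤ r)
    (hS : ∀ s ∈ S, ∀ s' ∈ S, dist s s' ≤ r) (hT : ∀ t ∈ T, ∀ t' ∈ T, dist t t' ≤ r)
    {x x' : (Fin n → ℝ) × (Fin n → ℝ)}
    (hx : x ∈ configurations n S T) (hx' : x' ∈ configurations n S T) : dist x x' ≤ r :=
  max_le ((dist_pi_le_iff hr).2 fun i => hS _ (hx.1 i) _ (hx'.1 i))
    ((dist_pi_le_iff hr).2 fun i => hT _ (hx.2 i) _ (hx'.2 i))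

theorem abs_couplingR_sub_le {n : ℕ} {d : ℝ} (hd : 0 < d) {S T : Set ℝ}
    (hST : ∀ s ∈ S, ∀ t ∈ T, d ≤ dist s t) {z x z' x' : (Fin n → ℝ) × (Fin n → ℝ)}
    (hz : z ∈ configurations n S T) (hx : x ∈ configurations n S T)
    (hz' : z' ∈ configurations n S T) (hx' : x' ∈ configurations n S T) :
    |couplingR n z x - couplingR n z' x'|
      ≤ 4 * n ^ 2 * (2 * dist x x' + dist z z') / d := by
  have hTS : ∀ t ∈ T, ∀ s ∈ S, d ≤ dist t s := fun t ht s hs => dist_comm s t ▸ hST s hs t ht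
  have bound_x₁z₂ := abs_logInteraction_sub_le hd
    (fun i k => hST _ (hx.1 i) _ (hz.2 k)) (fun i k => hST _ (hx'.1 i) _ (hz'.2 k))
  have bound_x₂z₁ := abs_logInteraction_sub_le hd
    (fun i k => hTS _ (hx.2 i) _ (hz.1 k)) (fun i k => hTS _ (hx'.2 i) _ (hz'.1 k))
  have bound_x₁x₂ := abs_logInteraction_sub_le hd
    (fun i k => hST _ (hx.1 i) _ (hx.2 k)) (fun i k => hST _ (hx'.1 i) _ (hx'.2 k))
  have dist_x₁ : dist x.1 x'.1 ≤ dist x x' := le_max_left _ _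
  have dist_x₂ : dist x.2 x'.2 ≤ dist x x' := le_max_right _ _
  have dist_z₁ : dist z.1 z'.1 ≤ dist z z' := le_max_left _ _
  have dist_z₂ : dist z.2 z'.2 ≤ dist z z' := le_max_right _ _
  rw [couplingR_eq_logInteraction, couplingR_eq_logInteraction, sub_sub_sub_comm,
    add_sub_add_comm]
  calc |logInteraction x.1 z.2 - logInteraction x'.1 z'.2
          + (logInteraction x.2 z.1 - logInteraction x'.2 z'.1)
          - (logInteraction x.1 x.2 - logInteraction x'.1 x'.2)|
      ≤ |logInteraction x.1 z.2 - logInteraction x'.1 z'.2|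
          + |logInteraction x.2 z.1 - logInteraction x'.2 z'.1|
          + |logInteraction x.1 x.2 - logInteraction x'.1 x'.2| :=
        (abs_sub _ _).trans (add_le_add (abs_add_le _ _) le_rfl)
    _ ≤ _ := add_le_add (add_le_add bound_x₁z₂ bound_x₂z₁) bound_x₁x₂
    _ = 2 * n ^ 2 * ((dist x.1 x'.1 + dist z.2 z'.2) + (dist x.2 x'.2 + dist z.1 z'.1)
          + (dist x.1 x'.1 + dist x.2 x'.2)) / d := by
        simp only [Fintype.card_fin]
        ring
    _ ≤ 2 * n ^ 2 * ((dist x x' + dist z z') + (dist x x' + dist z z')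
          + (dist x x' + dist x x')) / d := by gcongr
    _ = 4 * n ^ 2 * (2 * dist x x' + dist z z') / d := by ring

theorem couplingR_oscillation_bound_general {n : ℕ} {ℓ d : ℝ} (hℓ : 0 ≤ ℓ) (hd : 0 < d)
    {S T : Set ℝ} (hS : ∀ s ∈ S, ∀ s' ∈ S, dist s s' ≤ ℓ) (hT : ∀ t ∈ T, ∀ t' ∈ T, dist t t' ≤ ℓ)
    (hST : ∀ s ∈ S, ∀ t ∈ T, d ≤ dist s t) {z x z' x' : (Fin n → ℝ) × (Fin n → ℝ)}
    (hz : z ∈ configurations n S T) (hx : x ∈ configurations n S T)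
    (hz' : z' ∈ configurations n S T) (hx' : x' ∈ configurations n S T) :
    |couplingR n z x - couplingR n z' x'| ≤ 12 * n ^ 2 * ℓ / d :=
  calc |couplingR n z x - couplingR n z' x'|
      ≤ 4 * n ^ 2 * (2 * dist x x' + dist z z') / d :=
        abs_couplingR_sub_le hd hST hz hx hz' hx'
    _ ≤ 4 * n ^ 2 * (2 * ℓ + ℓ) / d := by
        gcongr
        · exact dist_le_of_mem_configurations hℓ hS hT hx hx'
        · exact dist_le_of_mem_configurations hℓ hS hT hz hz'
    _ = 12 * n ^ 2 * ℓ / d := by ring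

/-- Oscillation bound for the coupling remainder over configurations confined to two compact
intervals of length at most `ℓ` at distance at least `d` from each other. -/
theorem couplingR_oscillation_bound (n : ℕ) (ℓ d : ℝ) (hℓ : 0 < ℓ) (hd : 0 < d)
    (a₁ b₁ a₂ b₂ : ℝ) (h₁ : a₁ ≤ b₁) (h₂ : a₂ ≤ b₂)
    (hlen₁ : b₁ - a₁ ≤ ℓ) (hlen₂ : b₂ - a₂ ≤ ℓ)
    (hdist : ∀ s ∈ Set.Icc a₁ b₁, ∀ t ∈ Set.Icc a₂ b₂, d ≤ |s - t|)
    (x₁ z₁ x₁' z₁' : Fin n → ℝ)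
    (hx₁ : ∀ i, x₁ i ∈ Set.Icc a₁ b₁) (hz₁ : ∀ i, z₁ i ∈ Set.Icc a₁ b₁)
    (hx₁' : ∀ i, x₁' i ∈ Set.Icc a₁ b₁) (hz₁' : ∀ i, z₁' i ∈ Set.Icc a₁ b₁)
    (x₂ z₂ x₂' z₂' : Fin n → ℝ)
    (hx₂ : ∀ i, x₂ i ∈ Set.Icc a₂ b₂) (hz₂ : ∀ i, z₂ i ∈ Set.Icc a₂ b₂)
    (hx₂' : ∀ i, x₂' i ∈ Set.Icc a₂ b₂) (hz₂' : ∀ i, z₂' i ∈ Set.Icc a₂ b₂) :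
    |couplingR n (z₁, z₂) (x₁, x₂) - couplingR n (z₁', z₂') (x₁', x₂')|
      ≤ 12 * n ^ 2 * ℓ / d :=
  couplingR_oscillation_bound_general hℓ.le hd
    (fun _ hs _ hs' => (Real.dist_le_of_mem_Icc hs hs').trans hlen₁)
    (fun _ ht _ ht' => (Real.dist_le_of_mem_Icc ht ht').trans hlen₂)
    hdist ⟨hz₁, hz₂⟩ ⟨hx₁, hx₂⟩ ⟨hz₁', hz₂'⟩ ⟨hx₁', hx₂'⟩
end
end

section
/- Let (Ω, 𝔉, λ) be a σ-finite measure space, let H : Ω → ℝ be measurable with 0 < ∫_Ω e^{−H} dλ < ∞, and let R : Ω → ℝ be measurable and bounded with sup R − inf R ≤ ε for some ε ≥ 0. Let μ be the probability measure with density e^{−H}/∫e^{−H}dλ with respect to λ, and let ν be the probability measure with density e^{−H−R}/∫e^{−H−R}dλ with respect to λ. Then for every measurable set A ⊆ Ω, |μ(A) − ν(A)| ≤ e^{ε} − 1; that is, the total variation distance between μ and ν is at most e^{ε} − 1. -/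
open MeasureTheory

noncomputable section

/-!
The measure `ν` is the exponential tilt of `μ` by `-R`, with density
`exp (-R) / ∫ exp (-R) ∂μ`. If `-R` takes values in `[a, b]`, this density is at most
`exp b / exp a`, so `ν ≤ exp (b - a) • μ` and hence `ν A - μ A ≤ exp (b - a) - 1` for every event
`A`. Applying this to `Aᶜ` bounds `μ A - ν A`, so no lower bound on the density is needed.
-/

section

open Set Real
open scoped NNReal

theorem exists_forall_mem_Icc_add_of_forall_sub_le {ι : Type*} {f : ι → ℝ} {ε : ℝ}
    (hf : ∀ x y, f x - f y ≤ ε) : ∃ a, ∀ x, f x ∈ Icc a (a + ε) := by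
  cases isEmpty_or_nonempty ι
  · exact ⟨0, isEmptyElim⟩
  have hbdd : BddBelow (range f) :=
    ⟨f (Classical.arbitrary ι) - ε, forall_mem_range.2 fun y => sub_le_comm.1 (hf _ y)⟩
  exact ⟨⨅ y, f y, fun x =>
    ⟨ciInf_le hbdd x, sub_le_iff_le_add.1 (le_ciInf fun y => sub_le_comm.1 (hf x y))⟩⟩

variable {Ω : Type*} [MeasurableSpace Ω] {μ ν : Measure Ω}

theorem abs_measureReal_sub_le_of_le_smul [IsProbabilityMeasure μ] [IsProbabilityMeasure ν]
    {c : ℝ≥0} (hνμ : ν ≤ c • μ) {A : Set Ω} (hA : MeasurableSet A) :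
    |μ.real A - ν.real A| ≤ c - 1 := by
  have hreal (B : Set Ω) : ν.real B ≤ c * μ.real B := by
    rw [← measureReal_nnreal_smul_apply]
    exact ENNReal.toReal_mono (measure_ne_top _ _) (hνμ B)
  have hc : (1 : ℝ) ≤ c := by simpa using hreal univ
  have hsub (B : Set Ω) : ν.real B - μ.real B ≤ c - 1 :=
    calc ν.real B - μ.real B ≤ (c - 1) * μ.real B := by linarith [hreal B]
      _ ≤ c - 1 := mul_le_of_le_one_right (sub_nonneg.2 hc) measureReal_le_one
  refine abs_sub_le_iff.2 ⟨?_, hsub A⟩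
  have hcompl := hsub Aᶜ
  rw [probReal_compl_eq_one_sub hA, probReal_compl_eq_one_sub hA] at hcompl
  linarith

variable {f g : Ω → ℝ} {a b : ℝ}

theorem integrable_exp_of_ae_mem_Icc [IsFiniteMeasure μ] (hg : AEMeasurable g μ)
    (hgab : ∀ᵐ x ∂μ, g x ∈ Icc a b) : Integrable (fun x => exp (g x)) μ := by
  simpa using ProbabilityTheory.integrable_exp_mul_of_mem_Icc (t := 1) hg hgab

theorem exp_le_integral_exp_of_ae_le [IsProbabilityMeasure μ]
    (hg : Integrable (fun x => exp (g x)) μ) (hag : ∀ᵐ x ∂μ, a ≤ g x) :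
    exp a ≤ ∫ x, exp (g x) ∂μ := by
  simpa using integral_mono_ae (integrable_const (exp a)) hg
    (hag.mono fun _ hx => exp_le_exp.2 hx)

theorem tilted_le_smul_of_ae_mem_Icc [IsProbabilityMeasure μ] (hg : AEMeasurable g μ)
    (hgab : ∀ᵐ x ∂μ, g x ∈ Icc a b) : μ.tilted g ≤ (exp (b - a)).toNNReal • μ := by
  have hZ : exp a ≤ ∫ x, exp (g x) ∂μ :=
    exp_le_integral_exp_of_ae_le (integrable_exp_of_ae_mem_Icc hg hgab) (hgab.mono fun _ hx => hx.1)
  have hdensity : ∀ᵐ x ∂μ, exp (g x) / ∫ y, exp (g y) ∂μ ≤ exp (b - a) := by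
    filter_upwards [hgab] with x hx
    rw [exp_sub]
    gcongr
    exact hx.2
  calc μ.tilted g ≤ μ.withDensity fun _ => ENNReal.ofReal (exp (b - a)) :=
        withDensity_mono (hdensity.mono fun _ hx => ENNReal.ofReal_le_ofReal hx)
    _ = (exp (b - a)).toNNReal • μ := withDensity_const _

theorem gibbs_tv_bound_of_oscillation_general {lam : Measure Ω} [NeZero lam]
    (hf : Integrable (fun x => exp (f x)) lam) (hg : AEMeasurable g lam)
    (hgab : ∀ᵐ x ∂lam, g x ∈ Icc a b) {A : Set Ω} (hA : MeasurableSet A) :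
    |(lam.tilted f).real A - (lam.tilted (f + g)).real A| ≤ exp (b - a) - 1 := by
  have := isProbabilityMeasure_tilted hf
  have hac := tilted_absolutelyContinuous lam f
  have hg' := hg.mono_ac hac
  have hgab' := hac.ae_le hgab
  have := isProbabilityMeasure_tilted (integrable_exp_of_ae_mem_Icc hg' hgab')
  rw [← tilted_tilted hf, ← coe_toNNReal _ (exp_nonneg (b - a))]
  exact abs_measureReal_sub_le_of_le_smul (tilted_le_smul_of_ae_mem_Icc hg' hgab') hA

end

/-- Total variation stability of Gibbs measures: if the Hamiltonian is perturbed by a bounded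
measurable `R` of oscillation at most `ε`, every event's probability changes by at most
`e^ε − 1`. -/
theorem gibbs_tv_bound_of_oscillation {Ω : Type*} [MeasurableSpace Ω]
    (lam : Measure Ω) [SigmaFinite lam]
    (H R : Ω → ℝ) (hH : Measurable H) (hR : Measurable R)
    (hHint : Integrable (fun x => Real.exp (-H x)) lam)
    (hHpos : 0 < ∫ x, Real.exp (-H x) ∂lam)
    (C : ℝ) (hRbdd : ∀ x, |R x| ≤ C)
    (ε : ℝ) (hε : 0 ≤ ε) (hosc : ∀ x y, R x - R y ≤ ε)
    (μ ν : Measure Ω)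
    (hμ : μ = lam.withDensity fun x =>
      ENNReal.ofReal (Real.exp (-H x) / ∫ x', Real.exp (-H x') ∂lam))
    (hν : ν = lam.withDensity fun x =>
      ENNReal.ofReal (Real.exp (-H x - R x) / ∫ x', Real.exp (-H x' - R x') ∂lam)) :
    ∀ A : Set Ω, MeasurableSet A → |(μ A).toReal - (ν A).toReal| ≤ Real.exp ε - 1 := by
  intro A hA
  have : NeZero lam := ⟨by rintro rfl; simp at hHpos⟩
  obtain ⟨a, ha⟩ := exists_forall_mem_Icc_add_of_forall_sub_le (f := -R) (ε := ε) fun x y => by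
    simpa [neg_add_eq_sub] using hosc y x
  simp only [sub_eq_add_neg (-H _)] at hν
  rw [hμ, hν, ← add_sub_cancel_left a ε]
  exact gibbs_tv_bound_of_oscillation_general hHint hR.neg.aemeasurable (ae_of_all _ ha) hA
end
end
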